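/- arXiv:2411.03516 — 2 statements merged into one kernel-verified Lean document; each statement's English description precedes it below -/
import Mathlib

section
/- For every β>1, the bifurcation set satisfies E_β = {t ∈ [0,1) : T_β^n(t) ≥ t for all n ≥ 0}. -/
open Set Filter MeasureTheory Topology

noncomputable section

/-- The β-transformation `x ↦ βx - ⌊βx⌋`. -/
def Tbeta (β x : ℝ) : ℝ := Int.fract (β * x)

/-- The survivor set `K_β(t)`: points of `[0,1)` whose orbit never enters `[0,t)`. -/
def survivor (β t : ℝ) : Set ℝ :=
  {x | x ∈ Set.Ico (0 : ℝ) 1 ∧ ∀ n : ℕ, t ≤ (Tbeta β)^[n] x}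

/-- The set-valued bifurcation set `E_β`. -/
def Ebif (β : ℝ) : Set ℝ :=
  {t | t ∈ Set.Ico (0 : ℝ) 1 ∧ ∀ t' : ℝ, t < t' → survivor β t' ≠ survivor β t}

/-- `(c)_β = Σ_{i≥1} c_i β^{-i}` for an infinite digit sequence (indexed from `0`). -/
def valSeq (β : ℝ) (c : ℕ → ℕ) : ℝ := ∑' i : ℕ, (c i : ℝ) / β ^ (i + 1)

/-- `(w 0^∞)_β` for a finite word `w`. -/
def valWord (β : ℝ) (w : List ℕ) : ℝ :=
  ∑ i ∈ Finset.range w.length, (w.getD i 0 : ℝ) / β ^ (i + 1)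

/-- `w⁺`: increment the last letter of `w`. -/
def wplus (w : List ℕ) : List ℕ := w.dropLast ++ [w.getLast! + 1]

/-- `w⁻`: decrement the last letter of `w`. -/
def wminus (w : List ℕ) : List ℕ := w.dropLast ++ [w.getLast! - 1]

/-- `θ`: increment every digit of `w` by one. -/
def theta (w : List ℕ) : List ℕ := w.map (· + 1)

/-- `L(w)`: the lexicographically largest cyclic permutation of `w`. -/
def maxCyc (w : List ℕ) : List ℕ := ((List.range w.length).map w.rotate).foldl max []

/-- `w^∞`: the periodic sequence with period block `w`. -/
def perSeq (w : List ℕ) : ℕ → ℕ := fun i => w.getD (i % w.length) 0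

/-- The sequence given by the word `w` followed by the sequence `c`. -/
def wordSeq (w : List ℕ) (c : ℕ → ℕ) : ℕ → ℕ :=
  fun i => if i < w.length then w.getD i 0 else c (i - w.length)

/-- Strict lexicographic order `≺` on sequences. -/
def seqLt (x y : ℕ → ℕ) : Prop := ∃ n, (∀ i < n, x i = y i) ∧ x n < y n

/-- Lexicographic order `≼` on sequences. -/
def seqLe (x y : ℕ → ℕ) : Prop := x = y ∨ seqLt x y

/-- The `n`-fold left shift `σⁿ` on sequences. -/
def shiftn (n : ℕ) (x : ℕ → ℕ) : ℕ → ℕ := fun i => x (i + n)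

/-- One step of the Farey recursion: insert the concatenation `w_i w_{i+1}`
between consecutive entries. -/
def fareyInsert : List (List ℕ) → List (List ℕ)
  | [] => []
  | [w] => [w]
  | w :: v :: rest => w :: (w ++ v) :: fareyInsert (v :: rest)

/-- The ordered set `F_n` of Farey words of level `n`. -/
def fareyLevel : ℕ → List (List ℕ)
  | 0 => [[0], [1]]
  | n + 1 => fareyInsert (fareyLevel n)

/-- `F`: all Farey words of length at least two. -/
def FareySet : Set (List ℕ) := {w | (∃ n, w ∈ fareyLevel n) ∧ w ≠ [0] ∧ w ≠ [1]}

/-- `F̂ = F ∪ {1}`. -/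
def FareyHat : Set (List ℕ) := FareySet ∪ {[1]}

/-- The extended Farey set `F_e = {θ^k(w) : w ∈ F̂, k ≥ 0}`. -/
def FareyExt : Set (List ℕ) := {w | ∃ v ∈ FareyHat, ∃ k : ℕ, w = theta^[k] v}

/-- A nonempty word is Lyndon iff it is strictly smaller than each of its nontrivial
cyclic rotations (equivalently: aperiodic and lexicographically smallest among its
cyclic permutations). -/
def IsLyndon (w : List ℕ) : Prop := w ≠ [] ∧ ∀ i, 0 < i → i < w.length → w < w.rotate i

/-- `L_e`: all Lyndon words over `ℕ ∪ {0}` except the single-letter word `0`. -/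
def LyndonExt : Set (List ℕ) := {w | IsLyndon w ∧ w ≠ [0]}

/-- `L`: Lyndon words over `{0,1}` of length at least `2`. -/
def LyndonBin : Set (List ℕ) := {w | IsLyndon w ∧ 2 ≤ w.length ∧ ∀ d ∈ w, d ≤ 1}

/-- The block of `Φ_s` emitted for current digit `d` after previous digit `p`:
`L(s)` for `00`, `s⁻` for `10`, `L(s)⁺` for `01`, `s` for `11`. -/
def phiBlock (s : List ℕ) (p d : ℕ) : List ℕ :=
  if d = 0 then (if p = 0 then maxCyc s else wminus s)
  else (if p = 0 then wplus (maxCyc s) else s)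

def phiAux (s : List ℕ) : ℕ → List ℕ → List ℕ
  | _, [] => []
  | p, d :: rest => phiBlock s p d ++ phiAux s d rest

/-- The substitution `Φ_s` on finite words; `s • r = subst s r`.  An initial digit `0`
produces `s⁻`, an initial digit `1` produces `L(s)⁺`, and thereafter runs
`0^k` resp. `1^l` produce `L(s)^{k-1}` resp. `s^{l-1}`, in accordance with
`Φ_s(0^{k₁}1^{l₁}…) = s⁻ L(s)^{k₁-1} L(s)⁺ s^{l₁-1} …` and
`Φ_s(1^{k₁}0^{l₁}…) = L(s)⁺ s^{k₁-1} s⁻ L(s)^{l₁-1} …`. -/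
def subst (s r : List ℕ) : List ℕ :=
  match r with
  | [] => []
  | d :: rest => phiBlock s (1 - d) d ++ phiAux s d rest

/-- The substitution `Φ_s` on infinite sequences, as the limit of its values
on initial segments (each digit contributes a nonempty block, so the `i`-th letter
is determined by the first `i+1` digits). -/
def phiSeq (s : List ℕ) (c : ℕ → ℕ) : ℕ → ℕ :=
  fun i => (subst s (List.ofFn fun j : Fin (i + 1) => c j)).getD i 0

/-- `Λ_e(m) = {s₁ • s₂ • … • s_m : s₁ ∈ F_e, s₂,…,s_m ∈ F}`. -/
def LambdaE (m : ℕ) : Set (List ℕ) :=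
  {w | ∃ s₁ ∈ FareyExt, ∃ rs : List (List ℕ),
    rs.length = m - 1 ∧ (∀ r ∈ rs, r ∈ FareySet) ∧ w = rs.foldl subst s₁}

/-- `Λ_e = ∪_{m≥1} Λ_e(m)`. -/
def LambdaExt : Set (List ℕ) := ⋃ m ∈ Set.Ici 1, LambdaE m

/-- `β_ℓ^S`: the base `β > 1` with `(L(S)^∞)_β = 1` (it is unique since
`β ↦ (c)_β` is strictly decreasing). -/
def betaL (S : List ℕ) : ℝ :=
  Classical.epsilon fun β : ℝ => 1 < β ∧ valSeq β (perSeq (maxCyc S)) = 1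

/-- `β_*^S`: the base `β > 1` with `(L(S)⁺ S⁻ L(S)^∞)_β = 1`. -/
def betaStar (S : List ℕ) : ℝ :=
  Classical.epsilon fun β : ℝ =>
    1 < β ∧ valSeq β (wordSeq (wplus (maxCyc S) ++ wminus S) (perSeq (maxCyc S))) = 1

/-- `β_r^S`: the base `β > 1` with `(L(S)⁺ S^∞)_β = 1`. -/
def betaR (S : List ℕ) : ℝ :=
  Classical.epsilon fun β : ℝ => 1 < β ∧ valSeq β (wordSeq (wplus (maxCyc S)) (perSeq S)) = 1

/-- The Lyndon/Farey interval `J^S = [β_ℓ^S, β_r^S]`. -/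
def Jint (S : List ℕ) : Set ℝ := Set.Icc (betaL S) (betaR S)

/-- The basic interval `I^S = [β_ℓ^S, β_*^S]`. -/
def Iint (S : List ℕ) : Set ℝ := Set.Icc (betaL S) (betaStar S)

/-- The exceptional set `E = (1,∞) ∖ ∪_{s ∈ F_e} J^s`. -/
def Eexc : Set ℝ := Set.Ioi 1 \ ⋃ s ∈ FareyExt, Jint s

/-- The relative exceptional set `E^S = (J^S ∖ I^S) ∖ ∪_{r ∈ F} J^{S•r}`. -/
def EexcRel (S : List ℕ) : Set ℝ :=
  (Jint S \ Iint S) \ ⋃ r ∈ FareySet, Jint (subst S r)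

/-- The infinitely renormalizable set `E_∞ = ∩_{m≥1} ∪_{S ∈ Λ_e(m)} J^S`. -/
def Einf : Set ℝ := ⋂ m ∈ Set.Ici 1, ⋃ S ∈ LambdaE m, Jint S

/-- `E_L = E ∪ {β_ℓ^s : s ∈ F_e}`. -/
def EL : Set ℝ := Eexc ∪ {x | ∃ s ∈ FareyExt, x = betaL s}

/-- The critical value `τ(β) = min{t > 0 : dim_H K_β(t) = 0}`. -/
def tau (β : ℝ) : ℝ := sInf {t : ℝ | 0 < t ∧ dimH (survivor β t) = 0}

end

/-- The β-transformation is right-continuous and locally increasing to the right. -/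
lemma tendsto_Tbeta_nhdsGE {β : ℝ} (hβ : 0 ≤ β) (x : ℝ) :
    Tendsto (Tbeta β) (𝓝[≥] x) (𝓝[≥] (Tbeta β x)) := by
  have hmul : Tendsto (fun y => β * y) (𝓝[≥] x) (𝓝[≥] (β * x)) := by
    refine tendsto_nhdsWithin_iff.2 ⟨?_, ?_⟩
    · exact ((continuous_const_mul β).tendsto x).mono_left nhdsWithin_le_nhds
    · filter_upwards [self_mem_nhdsWithin] with y hy
      exact mul_le_mul_of_nonneg_left hy hβ
  have hfloor : ∀ᶠ y in 𝓝[≥] x, ⌊β * y⌋ = ⌊β * x⌋ :=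
    tendsto_pure.1 ((tendsto_floor_right_pure_floor (β * x)).comp hmul)
  refine tendsto_nhdsWithin_iff.2 ⟨?_, ?_⟩
  · have hsub : Tendsto (fun y => β * y - ⌊β * x⌋) (𝓝[≥] x) (𝓝 (β * x - ⌊β * x⌋)) :=
      (hmul.mono_right nhdsWithin_le_nhds).sub_const _
    refine hsub.congr' ?_
    filter_upwards [hfloor] with y hy
    rw [Tbeta, Int.fract, hy]
  · filter_upwards [hfloor, self_mem_nhdsWithin] with y hy hxy
    simp only [Tbeta, Int.fract, mem_Ici, hy]
    exact sub_le_sub_right (mul_le_mul_of_nonneg_left hxy hβ) _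

lemma tendsto_iterate_Tbeta_nhdsGE {β : ℝ} (hβ : 0 ≤ β) (n : ℕ) (x : ℝ) :
    Tendsto (Tbeta β)^[n] (𝓝[≥] x) (𝓝[≥] ((Tbeta β)^[n] x)) := by
  induction n generalizing x with
  | zero => exact tendsto_id
  | succ n ih => exact (ih (Tbeta β x)).comp (tendsto_Tbeta_nhdsGE hβ x)

/-- If the orbit of `t` drops below `t`, the survivor set is constant just to the right of `t`. -/
lemma exists_gt_survivor_eq {β t : ℝ} (hβ : 0 ≤ β) {n : ℕ} (hn : (Tbeta β)^[n] t < t) :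
    ∃ t' > t, survivor β t' = survivor β t := by
  have hlt : ∀ᶠ y in 𝓝[≥] t, (Tbeta β)^[n] y < t :=
    ((tendsto_iterate_Tbeta_nhdsGE hβ n t).mono_right nhdsWithin_le_nhds).eventually_lt_const hn
  obtain ⟨t', ht', hsub⟩ := mem_nhdsGE_iff_exists_Ico_subset.1 hlt
  refine ⟨t', ht', Subset.antisymm ?_ ?_⟩
  · exact fun x hx => ⟨hx.1, fun m => (le_of_lt ht').trans (hx.2 m)⟩
  · refine fun x hx => ⟨hx.1, fun m => le_of_not_gt fun hm => ?_⟩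
    have hdrop : (Tbeta β)^[n] ((Tbeta β)^[m] x) < t := hsub ⟨hx.2 m, hm⟩
    rw [← Function.iterate_add_apply] at hdrop
    exact (hx.2 (n + m)).not_gt hdrop

/-- For every `β > 1`, the bifurcation set satisfies
`E_β = {t ∈ [0,1) : T_β^n(t) ≥ t for all n ≥ 0}`. -/
theorem bifurcation_set_eq (β : ℝ) (hβ : 1 < β) :
    Ebif β = {t | t ∈ Set.Ico (0 : ℝ) 1 ∧ ∀ n : ℕ, t ≤ (Tbeta β)^[n] t} := by
  ext t
  refine ⟨fun ht => ⟨ht.1, fun n => le_of_not_gt fun hn => ?_⟩, fun ht => ⟨ht.1, ?_⟩⟩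
  · obtain ⟨t', ht', heq⟩ := exists_gt_survivor_eq (zero_le_one.trans hβ.le) hn
    exact ht.2 t' ht' heq
  · intro t' ht' heq
    have hmem : t ∈ survivor β t' := heq ▸ ht
    exact (hmem.2 0).not_gt ht'
end

section
/- For every β>1, the bifurcation set E_β has Lebesgue measure zero and Hausdorff dimension 1. -/
open Set Filter MeasureTheory Topology

theorem Tbeta_nonneg (β x : ℝ) : 0 ≤ Tbeta β x := Int.fract_nonneg _

theorem Tbeta_lt_one (β x : ℝ) : Tbeta β x < 1 := Int.fract_lt_one _

theorem Tbeta_iterate_mem_Ico (β : ℝ) {x : ℝ} (hx : x ∈ Ico (0 : ℝ) 1) (n : ℕ) :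
    (Tbeta β)^[n] x ∈ Ico (0 : ℝ) 1 := by
  cases n with
  | zero => exact hx
  | succ n =>
    rw [Function.iterate_succ_apply']
    exact ⟨Tbeta_nonneg _ _, Tbeta_lt_one _ _⟩

theorem Tbeta_eq_of_mul_eq {β x u : ℝ} (d : ℤ) (h : β * x = d + u) (hu : u ∈ Ico (0 : ℝ) 1) :
    Tbeta β x = u := by
  rw [Tbeta, h, Int.fract_intCast_add, Int.fract_eq_self.2 hu]

/-- To the left of `x`, the iterate `T^n` is affine until it reaches the value `0`. -/
theorem Tbeta_iterate_eq_of_le {β : ℝ} (hβ : 1 < β) {x y : ℝ} (hx : x ∈ Ico (0 : ℝ) 1)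
    (hyx : y ≤ x) (n : ℕ) (h : 0 ≤ (Tbeta β)^[n] x - β ^ n * (x - y)) :
    (Tbeta β)^[n] y = (Tbeta β)^[n] x - β ^ n * (x - y) := by
  induction n with
  | zero => simp
  | succ n ih =>
    have hβ0 : 0 < β := by linarith
    have hT := Tbeta_iterate_mem_Ico β hx n
    rw [Function.iterate_succ_apply'] at h
    rw [Function.iterate_succ_apply', Function.iterate_succ_apply']
    have hd : (0 : ℝ) ≤ ⌊β * (Tbeta β)^[n] x⌋ := by
      exact_mod_cast Int.floor_nonneg.2 (mul_nonneg hβ0.le hT.1)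
    have hfr : Tbeta β ((Tbeta β)^[n] x) = β * (Tbeta β)^[n] x - ⌊β * (Tbeta β)^[n] x⌋ := rfl
    have hpos : 0 ≤ (Tbeta β)^[n] x - β ^ n * (x - y) := by
      refine nonneg_of_mul_nonneg_right (a := β) ?_ hβ0
      rw [hfr, pow_succ] at h
      linarith
    rw [ih hpos]
    refine Tbeta_eq_of_mul_eq ⌊β * (Tbeta β)^[n] x⌋ (by rw [hfr]; ring) ⟨h, ?_⟩
    have : 0 ≤ β ^ (n + 1) * (x - y) := mul_nonneg (by positivity) (by linarith)
    linarith [Tbeta_lt_one β ((Tbeta β)^[n] x)]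

/-- Each iterate `T^n` is affine on a right neighbourhood of every point. -/
theorem exists_Tbeta_iterate_eq_of_ge {β : ℝ} (hβ : 1 < β) (x : ℝ) (n : ℕ) :
    ∃ ε > 0, ∀ y ∈ Ico x (x + ε), (Tbeta β)^[n] y = (Tbeta β)^[n] x + β ^ n * (y - x) := by
  induction n with
  | zero => exact ⟨1, one_pos, fun y _ => by simp⟩
  | succ n ih =>
    obtain ⟨ε, hε, h⟩ := ih
    have hβ0 : 0 < β := by linarith
    have hgap : 0 < 1 - Tbeta β ((Tbeta β)^[n] x) := sub_pos.2 (Tbeta_lt_one _ _)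
    refine ⟨min ε ((1 - Tbeta β ((Tbeta β)^[n] x)) / β ^ (n + 1)),
      lt_min hε (by positivity), fun y hy => ?_⟩
    have hy1 : y < x + ε := hy.2.trans_le (by gcongr; exact min_le_left _ _)
    have hy2 : y - x < (1 - Tbeta β ((Tbeta β)^[n] x)) / β ^ (n + 1) := by
      have := min_le_right ε ((1 - Tbeta β ((Tbeta β)^[n] x)) / β ^ (n + 1))
      linarith [hy.2]
    rw [lt_div_iff₀ (by positivity)] at hy2
    rw [Function.iterate_succ_apply', Function.iterate_succ_apply', h y ⟨hy.1, hy1⟩]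
    have hfr : Tbeta β ((Tbeta β)^[n] x) = β * (Tbeta β)^[n] x - ⌊β * (Tbeta β)^[n] x⌋ := rfl
    refine Tbeta_eq_of_mul_eq ⌊β * (Tbeta β)^[n] x⌋ (by rw [hfr]; ring) ⟨?_, by linarith⟩
    have : 0 ≤ β ^ (n + 1) * (y - x) := mul_nonneg (by positivity) (by linarith [hy.1])
    linarith [Tbeta_nonneg β ((Tbeta β)^[n] x)]

/-- The bifurcation set consists of the points that are minimal in their orbit. -/
theorem mem_Ebif_iff {β : ℝ} (hβ : 1 < β) {t : ℝ} :
    t ∈ Ebif β ↔ t ∈ survivor β t := by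
  constructor
  · rintro ⟨ht, h⟩
    refine ⟨ht, fun n => ?_⟩
    by_contra! hlt
    obtain ⟨ε, hε, haff⟩ := exists_Tbeta_iterate_eq_of_ge hβ t n
    have hβn : 0 < β ^ n := pow_pos (by linarith) n
    set η := min ε ((t - (Tbeta β)^[n] t) / β ^ n)
    have hη : 0 < η := lt_min hε (div_pos (by linarith) hβn)
    refine h (t + η) (by linarith) (Subset.antisymm ?_ ?_)
    · exact fun x hx => ⟨hx.1, fun k => by linarith [hx.2 k]⟩
    · refine fun x hx => ⟨hx.1, fun k => ?_⟩
      by_contra! hk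
      have h1 : (Tbeta β)^[k] x < t + ε := by
        linarith [min_le_left ε ((t - (Tbeta β)^[n] t) / β ^ n)]
      have h2 : (Tbeta β)^[k] x - t < (t - (Tbeta β)^[n] t) / β ^ n := by
        linarith [min_le_right ε ((t - (Tbeta β)^[n] t) / β ^ n)]
      rw [lt_div_iff₀ hβn] at h2
      have h3 := haff _ ⟨hx.2 k, h1⟩
      rw [← Function.iterate_add_apply] at h3
      linarith [hx.2 (n + k)]
  · rintro ⟨ht, h⟩
    refine ⟨ht, fun t' htt' heq => ?_⟩
    have : t ∈ survivor β t' := heq ▸ ⟨ht, h⟩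
    exact absurd (this.2 0) (by simpa using htt')

theorem volume_survivor_eq_zero {β : ℝ} (hβ : 1 < β) {δ : ℝ} (hδ : 0 < δ) :
    volume (survivor β δ) = 0 := by
  have hβ0 : 0 < β := by linarith
  by_contra hne
  obtain ⟨x, hx, hlim⟩ : ∃ x ∈ survivor β δ, Tendsto (fun r => volume (survivor β δ ∩
      Metric.closedBall x r) / volume (Metric.closedBall x r)) (𝓝[>] 0) (𝓝 1) := by
    have hmem : ∃ᵐ x ∂volume.restrict (survivor β δ), x ∈ survivor β δ := by
      rw [Filter.Frequently, ae_iff]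
      simp only [not_not]
      rw [Set.ofPred_mem_eq, Measure.restrict_apply_self]
      exact hne
    exact (hmem.and_eventually (Besicovitch.ae_tendsto_measure_inter_div volume _)).exists
  have hinv : Tendsto (fun n : ℕ => (β ^ n)⁻¹) atTop (𝓝[>] 0) := by
    refine tendsto_nhdsWithin_iff.2 ⟨?_, Eventually.of_forall fun n => ?_⟩
    · exact (tendsto_pow_atTop_atTop_of_one_lt hβ).inv_tendsto_atTop
    · exact inv_pos.2 (pow_pos hβ0 n)
  have hlim' := hlim.comp hinv
  have hbound : ∀ n : ℕ, volume (survivor β δ ∩ Metric.closedBall x (β ^ n)⁻¹) /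
      volume (Metric.closedBall x (β ^ n)⁻¹) ≤ ENNReal.ofReal (1 - δ / 2) := by
    intro n
    have hβn : 0 < β ^ n := pow_pos hβ0 n
    have hT := Tbeta_iterate_mem_Ico β hx.1 n
    have hδT := hx.2 n
    set τ := (Tbeta β)^[n] x
    have hsub : survivor β δ ∩ Metric.closedBall x (β ^ n)⁻¹ ⊆
        Metric.closedBall x (β ^ n)⁻¹ \ Ico (x - τ / β ^ n) (x - τ / β ^ n + δ / β ^ n) := by
      rintro y ⟨hy, hyb⟩
      refine ⟨hyb, fun hyI => ?_⟩
      have h1 : (x - y) * β ^ n ≤ τ := by rw [← le_div_iff₀ hβn]; linarith [hyI.1]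
      have h2 : τ - (x - y) * β ^ n < δ := by
        have : y - x + τ / β ^ n < δ / β ^ n := by linarith [hyI.2]
        rw [lt_div_iff₀ hβn, add_mul, div_mul_cancel₀ _ hβn.ne'] at this
        linarith
      have hyx : y ≤ x := by
        have : δ / β ^ n ≤ τ / β ^ n := by gcongr
        linarith [hyI.2]
      have h3 := Tbeta_iterate_eq_of_le hβ hx.1 hyx n (by linarith)
      linarith [hy.2 n]
    have hIsub : Ico (x - τ / β ^ n) (x - τ / β ^ n + δ / β ^ n) ⊆
        Metric.closedBall x (β ^ n)⁻¹ := by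
      rw [Real.closedBall_eq_Icc]
      intro y hy
      have h1 : τ / β ^ n ≤ (β ^ n)⁻¹ := by
        rw [div_eq_mul_inv]; exact mul_le_of_le_one_left (by positivity) hT.2.le
      have h2 : δ / β ^ n ≤ τ / β ^ n := by gcongr
      have h3 : 0 < (β ^ n)⁻¹ := by positivity
      exact ⟨by linarith [hy.1], by linarith [hy.2]⟩
    have hvol : volume (survivor β δ ∩ Metric.closedBall x (β ^ n)⁻¹) ≤
        ENNReal.ofReal (2 * (β ^ n)⁻¹ - δ / β ^ n) := by
      refine (measure_mono hsub).trans ?_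
      rw [measure_sdiff hIsub measurableSet_Ico.nullMeasurableSet (by simp), Real.volume_closedBall,
        Real.volume_Ico, add_sub_cancel_left, ENNReal.ofReal_sub _ (by positivity)]
    rw [Real.volume_closedBall]
    refine ENNReal.div_le_of_le_mul (hvol.trans (le_of_eq ?_))
    rw [← ENNReal.ofReal_mul]
    · congr 1; field_simp
    · linarith [hT.2]
  have hle := le_of_tendsto' hlim' hbound
  rw [ENNReal.one_le_ofReal] at hle
  linarith

theorem volume_Ebif_eq_zero {β : ℝ} (hβ : 1 < β) : volume (Ebif β) = 0 := by
  have hsub : Ebif β ⊆ {0} ∪ ⋃ n : ℕ, survivor β (1 / ((n : ℝ) + 1)) := by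
    intro t ht
    obtain ⟨ht0, hts⟩ := (mem_Ebif_iff hβ).1 ht
    rcases ht0.1.eq_or_lt with h | h
    · exact Or.inl h.symm
    · obtain ⟨n, hn⟩ := exists_nat_one_div_lt h
      exact Or.inr (mem_iUnion.2 ⟨n, ht0, fun k => hn.le.trans (hts k)⟩)
  refine measure_mono_null hsub (measure_union_null (by simp) (measure_iUnion_null fun n => ?_))
  exact volume_survivor_eq_zero hβ (by positivity)

/-- Left endpoints of the full cylinders of order `m`, i.e. of the intervals of length `β^{-m}`
that `T^m` maps affinely onto `[0,1)`. -/
def fullLeft (β : ℝ) (m : ℕ) : Set ℝ :=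
  {a | 0 ≤ a ∧ ∀ u ∈ Ico (0 : ℝ) 1, a + u / β ^ m < 1 ∧ (Tbeta β)^[m] (a + u / β ^ m) = u}

theorem fullLeft_lt_one {β a : ℝ} {m : ℕ} (ha : a ∈ fullLeft β m) : a < 1 := by
  simpa using (ha.2 0 (by simp)).1

theorem fullLeft_add_one_div_le_one {β a : ℝ} (hβ : 1 < β) {m : ℕ} (ha : a ∈ fullLeft β m) :
    a + 1 / β ^ m ≤ 1 := by
  have hβm : 0 < β ^ m := pow_pos (by linarith) m
  by_contra! h
  have hu : (1 - a) * β ^ m ∈ Ico (0 : ℝ) 1 := by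
    refine ⟨mul_nonneg (by linarith [fullLeft_lt_one ha]) hβm.le, ?_⟩
    rw [← lt_div_iff₀ hβm]; linarith
  have h1 := (ha.2 _ hu).1
  rw [mul_div_cancel_right₀ _ hβm.ne'] at h1
  linarith

theorem fullLeft_subset_succ {β : ℝ} (hβ : 1 < β) (m : ℕ) :
    fullLeft β m ⊆ fullLeft β (m + 1) := by
  intro a ha
  have hβ0 : 0 < β := by linarith
  refine ⟨ha.1, fun u hu => ?_⟩
  have hub : u / β ∈ Ico (0 : ℝ) 1 :=
    ⟨div_nonneg hu.1 hβ0.le, by rw [div_lt_one hβ0]; linarith [hu.2]⟩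
  have heq : a + u / β ^ (m + 1) = a + (u / β) / β ^ m := by rw [pow_succ]; field_simp
  obtain ⟨h1, h2⟩ := ha.2 _ hub
  rw [heq, Function.iterate_succ_apply', h2]
  exact ⟨h1, Tbeta_eq_of_mul_eq 0 (by field_simp; simp) hu⟩

theorem fullLeft_mono {β : ℝ} (hβ : 1 < β) : Monotone (fullLeft β) :=
  monotone_nat_of_le_succ (fullLeft_subset_succ hβ)

theorem zero_mem_fullLeft {β : ℝ} (hβ : 1 < β) (m : ℕ) : (0 : ℝ) ∈ fullLeft β m :=
  fullLeft_mono hβ (Nat.zero_le m) ⟨le_rfl, fun u hu => by simpa using hu.2⟩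

/-- Full cylinders of the same order do not overlap. -/
theorem fullLeft_separated {β : ℝ} (hβ : 1 < β) {m : ℕ} {a b : ℝ} (ha : a ∈ fullLeft β m)
    (hb : b ∈ fullLeft β m) (hab : a < b) : a + 1 / β ^ m ≤ b := by
  have hβm : 0 < β ^ m := pow_pos (by linarith) m
  by_contra! h
  have hu : (b - a) * β ^ m ∈ Ico (0 : ℝ) 1 := by
    refine ⟨mul_nonneg (by linarith) hβm.le, ?_⟩
    rw [← lt_div_iff₀ hβm]; linarith
  have h1 := (ha.2 _ hu).2
  have h2 := (hb.2 0 (by simp)).2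
  rw [mul_div_cancel_right₀ _ hβm.ne', add_sub_cancel] at h1
  rw [zero_div, add_zero, h1] at h2
  have : 0 < (b - a) * β ^ m := mul_pos (by linarith) hβm
  linarith

theorem fullLeft_finite {β : ℝ} (hβ : 1 < β) (m : ℕ) : (fullLeft β m).Finite := by
  have hβm : 0 < β ^ m := pow_pos (by linarith) m
  have hmaps : MapsTo (fun a : ℝ => ⌊a * β ^ m⌋) (fullLeft β m) (Icc 0 ⌊β ^ m⌋) := by
    intro a ha
    refine ⟨Int.floor_nonneg.2 (mul_nonneg ha.1 hβm.le), Int.floor_le_floor ?_⟩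
    exact mul_le_of_le_one_left hβm.le (fullLeft_lt_one ha).le
  have hlt : ∀ a ∈ fullLeft β m, ∀ b ∈ fullLeft β m, a < b → ⌊a * β ^ m⌋ < ⌊b * β ^ m⌋ := by
    intro a ha b hb hab
    have h := mul_le_mul_of_nonneg_right (fullLeft_separated hβ ha hb hab) hβm.le
    rw [add_mul, div_mul_cancel₀ _ hβm.ne'] at h
    have := Int.floor_le_floor h
    rw [Int.floor_add_one] at this
    lia
  refine Finite.of_finite_image ((finite_Icc _ _).subset hmaps.image_subset) ?_
  intro a ha b hb hab
  by_contra hne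
  rcases lt_or_gt_of_ne hne with h | h
  · exact (hlt a ha b hb h).ne hab
  · exact (hlt b hb a ha h).ne' hab

/-- The quasi-greedy orbit of `1`. -/
noncomputable def quasiOrbit (β : ℝ) : ℕ → ℝ
  | 0 => 1
  | j + 1 => β * quasiOrbit β j - (⌈β * quasiOrbit β j⌉ - 1)

theorem quasiOrbit_mem_Ioc (β : ℝ) (j : ℕ) : quasiOrbit β j ∈ Ioc (0 : ℝ) 1 := by
  cases j with
  | zero => simp [quasiOrbit]
  | succ j =>
    simp only [quasiOrbit]
    constructor
    · linarith [Int.ceil_lt_add_one (β * quasiOrbit β j)]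
    · linarith [Int.le_ceil (β * quasiOrbit β j)]

theorem ceil_mul_quasiOrbit_pos {β : ℝ} (hβ : 1 < β) (j : ℕ) : 0 < ⌈β * quasiOrbit β j⌉ :=
  Int.ceil_pos.2 (mul_pos (by linarith) (quasiOrbit_mem_Ioc β j).1)

theorem quasiOrbit_le_pow {β : ℝ} (hβ : 1 < β) (j : ℕ) : quasiOrbit β j ≤ β ^ j :=
  (quasiOrbit_mem_Ioc β j).2.trans (one_le_pow₀ hβ.le)

/-- `T^j` is affine on the cylinder of order `j` adjacent to `1`. -/
theorem Tbeta_iterate_last_cylinder {β : ℝ} (hβ : 1 < β) (j : ℕ) {w : ℝ}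
    (hw : w ∈ Ico 0 (quasiOrbit β j)) :
    (Tbeta β)^[j] (1 - (quasiOrbit β j - w) / β ^ j) = w := by
  have hβ0 : 0 < β := by linarith
  induction j generalizing w with
  | zero => simp [quasiOrbit]
  | succ j ih =>
    have hw1 : w ∈ Ico (0 : ℝ) 1 := ⟨hw.1, hw.2.trans_le (quasiOrbit_mem_Ioc β (j + 1)).2⟩
    set e : ℤ := ⌈β * quasiOrbit β j⌉ - 1 with he
    have he0 : (0 : ℝ) ≤ e := by
      exact_mod_cast Int.le_sub_one_of_lt (ceil_mul_quasiOrbit_pos hβ j)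
    have hq : quasiOrbit β (j + 1) = β * quasiOrbit β j - e := by simp [quasiOrbit, he]
    have hz : (e + w) / β ∈ Ico 0 (quasiOrbit β j) := by
      refine ⟨div_nonneg (by linarith [hw.1]) hβ0.le, ?_⟩
      rw [div_lt_iff₀ hβ0]
      linarith [hw.2]
    have heq : 1 - (quasiOrbit β (j + 1) - w) / β ^ (j + 1)
        = 1 - (quasiOrbit β j - (e + w) / β) / β ^ j := by
      rw [hq, pow_succ]; field_simp; ring
    rw [Function.iterate_succ_apply', heq, ih hz]
    exact Tbeta_eq_of_mul_eq e (by field_simp) hw1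

/-- Refining a full cylinder of order `k` by an initial word of the quasi-greedy expansion of `1`
of length `j` followed by a strictly smaller digit yields a full cylinder. -/
theorem fullLeft_extend {β : ℝ} (hβ : 1 < β) {k : ℕ} {a : ℝ} (ha : a ∈ fullLeft β k) (j : ℕ)
    {d : ℤ} (hd : 0 ≤ d) (hdq : (d : ℝ) + 1 ≤ β * quasiOrbit β j) :
    a + (1 - (quasiOrbit β j - d / β) / β ^ j) / β ^ k ∈ fullLeft β (j + k + 1) := by
  have hβ0 : 0 < β := by linarith
  have hd' : (0 : ℝ) ≤ d := by exact_mod_cast hd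
  have hlast : ∀ u ∈ Ico (0 : ℝ) 1,
      1 - (quasiOrbit β j - (d + u) / β) / β ^ j ∈ Ico (0 : ℝ) 1 ∧
      (d + u) / β ∈ Ico 0 (quasiOrbit β j) := by
    intro u hu
    have hz : (d + u) / β ∈ Ico 0 (quasiOrbit β j) := by
      refine ⟨div_nonneg (by linarith [hu.1]) hβ0.le, ?_⟩
      rw [div_lt_iff₀ hβ0]
      linarith [hu.2]
    refine ⟨⟨?_, ?_⟩, hz⟩
    · rw [sub_nonneg, div_le_one (by positivity)]
      linarith [quasiOrbit_le_pow hβ j, hz.1]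
    · have : 0 < (quasiOrbit β j - (d + u) / β) / β ^ j :=
        div_pos (by linarith [hz.2]) (by positivity)
      linarith
  refine ⟨add_nonneg ha.1 (div_nonneg ?_ (by positivity)), fun u hu => ?_⟩
  · simpa using (hlast 0 (by simp)).1.1
  · obtain ⟨hy, hz⟩ := hlast u hu
    have heq : a + (1 - (quasiOrbit β j - d / β) / β ^ j) / β ^ k + u / β ^ (j + k + 1)
        = a + (1 - (quasiOrbit β j - (d + u) / β) / β ^ j) / β ^ k := by
      rw [pow_succ, pow_add]; field_simp; ring
    obtain ⟨h1, h2⟩ := ha.2 _ hy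
    refine ⟨by rwa [heq], ?_⟩
    rw [heq, Function.iterate_succ_apply', Function.iterate_add_apply, h2,
      Tbeta_iterate_last_cylinder hβ j hz]
    exact Tbeta_eq_of_mul_eq d (by field_simp) hu

/-- Every point lies in a cylinder that is adjacent to the right endpoint of a full one. -/
theorem exists_fullLeft_decomposition {β : ℝ} (hβ : 1 < β) (m : ℕ) {x : ℝ}
    (hx : x ∈ Ico (0 : ℝ) 1) :
    ∃ j k, j + k = m ∧ ∃ a ∈ fullLeft β k, ∃ z ∈ Ico 0 (quasiOrbit β j),
      x = a + (1 - (quasiOrbit β j - z) / β ^ j) / β ^ k := by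
  have hβ0 : 0 < β := by linarith
  induction m with
  | zero => exact ⟨0, 0, rfl, 0, zero_mem_fullLeft hβ 0, x, by simpa [quasiOrbit] using hx,
      by simp [quasiOrbit]⟩
  | succ m ih =>
    obtain ⟨j, k, rfl, a, ha, z, hz, rfl⟩ := ih
    set d := ⌊β * z⌋ with hd
    have hd0 : 0 ≤ d := Int.floor_nonneg.2 (mul_nonneg hβ0.le hz.1)
    have hdz : (d : ℝ) ≤ β * z := Int.floor_le _
    have hzq : β * z < β * quasiOrbit β j := by gcongr; exact hz.2
    rcases lt_or_ge (d + 1) ⌈β * quasiOrbit β j⌉ with h | h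
    · refine ⟨0, j + k + 1, by ring, _, fullLeft_extend hβ ha j hd0 ?_, Int.fract (β * z),
        ⟨Int.fract_nonneg _, by simpa [quasiOrbit] using Int.fract_lt_one _⟩, ?_⟩
      · have := Int.lt_ceil.1 h
        push_cast at this
        exact this.le
      · have hfr : Int.fract (β * z) = β * z - d := rfl
        rw [hfr]
        simp only [quasiOrbit, pow_succ, pow_add, pow_zero]
        field_simp
        ring
    · have hde : d + 1 = ⌈β * quasiOrbit β j⌉ := by
        refine le_antisymm (Int.add_one_le_of_lt (Int.lt_ceil.2 (hdz.trans_lt hzq))) h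
      have hq : quasiOrbit β (j + 1) = β * quasiOrbit β j - d := by
        simp [quasiOrbit, ← hde]
      refine ⟨j + 1, k, by ring, a, ha, β * z - d, ⟨by linarith, by rw [hq]; linarith⟩, ?_⟩
      rw [hq, pow_succ]
      field_simp
      ring

/-- Up to a linear factor, there are at least `β^m` full cylinders of order `m`. -/
theorem pow_le_mul_ncard_fullLeft {β : ℝ} (hβ : 1 < β) (m : ℕ) :
    β ^ m ≤ (m + 1) * (fullLeft β m).ncard := by
  have hβ0 : 0 < β := by linarith
  have hfin := fullLeft_finite hβ m
  let lo : ℕ × ℝ → ℝ := fun p => p.2 + (1 - quasiOrbit β p.1 / β ^ p.1) / β ^ (m - p.1)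
  have hcover : Ico (0 : ℝ) 1 ⊆ ⋃ p ∈ Finset.range (m + 1) ×ˢ hfin.toFinset,
      Ico (lo p) (lo p + 1 / β ^ m) := by
    intro x hx
    obtain ⟨j, k, rfl, a, ha, z, hz, rfl⟩ := exists_fullLeft_decomposition hβ m hx
    have heq : a + (1 - (quasiOrbit β j - z) / β ^ j) / β ^ k = lo (j, a) + z / β ^ (j + k) := by
      simp only [lo, Nat.add_sub_cancel_left, pow_add]
      field_simp
      ring
    simp only [mem_iUnion]
    refine ⟨(j, a), ?_, ?_⟩
    · simp only [Finset.mem_product, Finset.mem_range, Finite.mem_toFinset]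
      exact ⟨by lia, fullLeft_mono hβ (Nat.le_add_left k j) ha⟩
    · rw [heq]
      have h0 : 0 ≤ z / β ^ (j + k) := div_nonneg hz.1 (by positivity)
      have h1 : z / β ^ (j + k) < 1 / β ^ (j + k) := by
        gcongr
        exact hz.2.trans_le (quasiOrbit_mem_Ioc β j).2
      exact ⟨by linarith, by linarith⟩
  have hvol := (measure_mono (μ := volume) hcover).trans (measure_biUnion_finset_le _ _)
  simp only [Real.volume_Ico, add_sub_cancel_left, sub_zero, Finset.sum_const, nsmul_eq_mul,
    Finset.card_product, Finset.card_range] at hvol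
  rw [← ENNReal.ofReal_natCast, ← ENNReal.ofReal_mul (by positivity),
    ENNReal.ofReal_le_ofReal_iff (by positivity), ← ncard_eq_toFinset_card _ hfin, mul_one_div,
    le_div_iff₀ (by positivity)] at hvol
  push_cast at hvol
  linarith

theorem exists_rpow_add_le_ncard_fullLeft {β : ℝ} (hβ : 1 < β) {r : ℝ} (hr0 : 0 ≤ r)
    (hr : r < 1) : ∃ m : ℕ, 0 < m ∧ (β ^ m) ^ r + 4 ≤ (fullLeft β m).ncard := by
  have hβ0 : 0 < β := by linarith
  have hρ : 1 < β ^ (1 - r) := Real.one_lt_rpow hβ (by linarith)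
  have hlim := tendsto_pow_const_div_const_pow_of_one_lt 1 hρ
  obtain ⟨m, hm, hm0⟩ := ((hlim.eventually (gt_mem_nhds (show (0 : ℝ) < 1 / 10 by norm_num))).and
    (eventually_gt_atTop 0)).exists
  refine ⟨m, hm0, ?_⟩
  have hm1 : (1 : ℝ) ≤ m := by exact_mod_cast hm0
  rw [pow_one, div_lt_iff₀ (by positivity)] at hm
  have hsplit : β ^ m = (β ^ m) ^ r * (β ^ (1 - r)) ^ m := by
    rw [← Real.rpow_natCast, ← Real.rpow_natCast, ← Real.rpow_mul hβ0.le, ← Real.rpow_mul hβ0.le,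
      ← Real.rpow_add hβ0]
    ring_nf
  have hone : 1 ≤ (β ^ m) ^ r := Real.one_le_rpow (one_le_pow₀ hβ.le) hr0
  have hcard := pow_le_mul_ncard_fullLeft hβ m
  refine le_of_mul_le_mul_left (a := (m : ℝ) + 1) (le_trans ?_ hcard) (by positivity)
  calc ((m : ℝ) + 1) * ((β ^ m) ^ r + 4) ≤ (2 * m) * (5 * (β ^ m) ^ r) := by
        gcongr <;> linarith
    _ = (β ^ m) ^ r * (10 * m) := by ring
    _ ≤ (β ^ m) ^ r * (β ^ (1 - r)) ^ m := by gcongr; linarith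
    _ = β ^ m := hsplit.symm

/-- If `[0,1]` is the image of a set under an `r`-Hölder correspondence, then that set has
Hausdorff dimension at least `r`. -/
theorem le_dimH_range_of_holder {X : Type*} {g h : X → ℝ} {C r : NNReal} (hr : 0 < r)
    (hgh : ∀ c d, |h c - h d| ≤ C * |g c - g d| ^ (r : ℝ)) (hsurj : Icc (0 : ℝ) 1 ⊆ range h) :
    (r : ENNReal) ≤ dimH (range g) := by
  have hr' : (r : ℝ) ≠ 0 := by exact_mod_cast hr.ne'
  obtain ⟨c₀, -⟩ := hsurj (left_mem_Icc.2 zero_le_one)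
  have : Nonempty X := ⟨c₀⟩
  let f : ℝ → ℝ := fun x => h (Function.invFun g x)
  have hfg : ∀ c, f (g c) = h c := by
    intro c
    have heq : g (Function.invFun g (g c)) = g c := Function.invFun_eq ⟨c, rfl⟩
    have := hgh (Function.invFun g (g c)) c
    rw [heq, sub_self, abs_zero, Real.zero_rpow hr', mul_zero] at this
    exact sub_eq_zero.1 (abs_nonpos_iff.1 this)
  have hf : HolderOnWith C r f (range g) := by
    rintro _ ⟨c, rfl⟩ _ ⟨d, rfl⟩
    rw [hfg, hfg, edist_dist, edist_dist, Real.dist_eq, Real.dist_eq,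
      ENNReal.ofReal_rpow_of_nonneg (abs_nonneg _) r.coe_nonneg, ← ENNReal.ofReal_coe_nnreal,
      ← ENNReal.ofReal_mul C.coe_nonneg]
    exact ENNReal.ofReal_le_ofReal (hgh c d)
  have himage : Icc (0 : ℝ) 1 ⊆ f '' range g := by
    intro y hy
    obtain ⟨c, rfl⟩ := hsurj hy
    exact ⟨g c, ⟨c, rfl⟩, hfg c⟩
  have hone : dimH (Icc (0 : ℝ) 1) = 1 := by
    rw [Real.dimH_of_nonempty_interior (by simp), Module.finrank_self, Nat.cast_one]
  have hle := (hone.symm.le.trans (dimH_mono himage)).trans (hf.dimH_image_le hr)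
  rw [ENNReal.le_div_iff_mul_le (by simp [hr.ne']) (by simp), one_mul] at hle
  exact hle

/-- The point with digits `a (c i)` in base `L`, with `c 0` the integer digit. -/
noncomputable def codePoint (L : ℝ) {ι : Type*} (a : ι → ℝ) (c : ℕ → ι) : ℝ :=
  ∑' i, a (c i) / L ^ i

section codePoint

variable {L : ℝ} {ι : Type*} {a : ι → ℝ}

theorem summable_codePoint (hL : 1 < L) (ha : ∀ i, a i ∈ Icc 0 (1 - 1 / L)) (c : ℕ → ι) :
    Summable fun i => a (c i) / L ^ i := by
  have hL0 : 0 < L := by linarith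
  refine Summable.of_nonneg_of_le (fun i => div_nonneg (ha _).1 (by positivity))
    (fun i => ?_) (((summable_geometric_of_lt_one (inv_nonneg.2 hL0.le)
      (inv_lt_one_of_one_lt₀ hL)).mul_left (1 - 1 / L)))
  rw [inv_pow, ← div_eq_mul_inv]
  gcongr
  exact (ha _).2

theorem codePoint_eq (hL : 1 < L) (ha : ∀ i, a i ∈ Icc 0 (1 - 1 / L)) (c : ℕ → ι) :
    codePoint L a c = a (c 0) + codePoint L a (fun i => c (i + 1)) / L := by
  rw [codePoint, (summable_codePoint hL ha c).tsum_eq_zero_add, codePoint, ← tsum_div_const]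
  simp [pow_succ, div_div]

theorem codePoint_mem_Icc (hL : 1 < L) (ha : ∀ i, a i ∈ Icc 0 (1 - 1 / L)) (c : ℕ → ι) :
    codePoint L a c ∈ Icc (0 : ℝ) 1 := by
  have hL0 : 0 < L := by linarith
  refine ⟨tsum_nonneg fun i => div_nonneg (ha _).1 (by positivity), ?_⟩
  have hgeom := (hasSum_geometric_of_lt_one (inv_nonneg.2 hL0.le)
      (inv_lt_one_of_one_lt₀ hL)).mul_left (1 - 1 / L)
  have hne : 1 - L⁻¹ ≠ 0 := (sub_pos.2 (inv_lt_one_of_one_lt₀ hL)).ne'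
  rw [one_div, mul_inv_cancel₀ hne] at hgeom
  refine hasSum_le (fun i => ?_) (summable_codePoint hL ha c).hasSum hgeom
  rw [inv_pow, ← div_eq_mul_inv, ← one_div]
  gcongr
  exact (ha _).2

/-- Codes that first differ at index `n` give points at distance at least `L^{-(n+2)}`. -/
theorem le_abs_codePoint_sub (hL : 1 < L) (ha : ∀ i, a i ∈ Icc (1 / L) (1 - 1 / L))
    (hsep : ∀ i j, a i < a j → a i + 1 / L ≤ a j) (hinj : Function.Injective a) (n : ℕ)
    {c d : ℕ → ι} (hlt : ∀ i < n, c i = d i) (hne : c n ≠ d n) :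
    1 / L ^ (n + 2) ≤ |codePoint L a c - codePoint L a d| := by
  have hL0 : 0 < L := by linarith
  have ha' : ∀ i, a i ∈ Icc 0 (1 - 1 / L) :=
    fun i => ⟨(one_div_pos.2 hL0).le.trans (ha i).1, (ha i).2⟩
  have hge : ∀ e : ℕ → ι, 1 / L ≤ codePoint L a e := by
    intro e
    rw [codePoint_eq hL ha']
    have := div_nonneg (codePoint_mem_Icc hL ha' fun i => e (i + 1)).1 hL0.le
    linarith [(ha (e 0)).1]
  induction n generalizing c d with
  | zero =>
    have key : ∀ c d : ℕ → ι, a (c 0) < a (d 0) →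
        1 / L ^ 2 ≤ codePoint L a d - codePoint L a c := by
      intro c d hcd
      rw [codePoint_eq hL ha' c, codePoint_eq hL ha' d]
      have h1 : codePoint L a (fun i => c (i + 1)) / L ≤ 1 / L := by
        gcongr; exact (codePoint_mem_Icc hL ha' _).2
      have h2 : 1 / L / L ≤ codePoint L a (fun i => d (i + 1)) / L := by
        gcongr; exact hge _
      have h3 : 1 / L / L = 1 / L ^ 2 := by rw [div_div, pow_two]
      linarith [hsep _ _ hcd]
    rcases lt_or_gt_of_ne (hinj.ne hne) with h | h
    · rw [abs_sub_comm]; exact (key c d h).trans (le_abs_self _)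
    · exact (key d c h).trans (le_abs_self _)
  | succ n ih =>
    have h := ih (c := fun i => c (i + 1)) (d := fun i => d (i + 1))
      (fun i hi => hlt (i + 1) (by lia)) hne
    rw [codePoint_eq hL ha' c, codePoint_eq hL ha' d, hlt 0 (by lia), add_sub_add_left_eq_sub,
      ← sub_div, abs_div, abs_of_pos hL0, le_div_iff₀ hL0]
    refine le_trans (le_of_eq ?_) h
    field_simp
    ring

end codePoint

theorem Tbeta_iterate_of_mul_lt_one {β : ℝ} (hβ : 1 < β) {x : ℝ} (hx : 0 ≤ x) (n : ℕ)
    (h : β ^ n * x < 1) : (Tbeta β)^[n] x = β ^ n * x := by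
  have hβ0 : 0 < β := by linarith
  induction n with
  | zero => simp
  | succ n ih =>
    have hle : β ^ n * x ≤ β ^ (n + 1) * x := by
      gcongr
      · exact hβ.le
      · lia
    rw [Function.iterate_succ_apply', ih (hle.trans_lt h)]
    exact Tbeta_eq_of_mul_eq 0 (by push_cast; ring) ⟨by positivity, h⟩

/-- A sufficiently contracted copy of a survivor set lies in the bifurcation set. -/
theorem div_pow_mem_Ebif {β : ℝ} (hβ : 1 < β) {x : ℝ} {N : ℕ}
    (hx : x ∈ survivor β (1 / β ^ N)) : x / β ^ N ∈ Ebif β := by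
  have hβ0 : 0 < β := by linarith
  have hle : ∀ k ≤ N, (Tbeta β)^[k] (x / β ^ N) = β ^ k * (x / β ^ N) := by
    intro k hk
    refine Tbeta_iterate_of_mul_lt_one hβ (div_nonneg hx.1.1 (by positivity)) k ?_
    rw [← mul_div_assoc, div_lt_one (by positivity)]
    calc β ^ k * x < β ^ k * 1 := by gcongr; exact hx.1.2
      _ ≤ β ^ N := by rw [mul_one]; gcongr; exact hβ.le
  have h0 : 0 ≤ x / β ^ N := div_nonneg hx.1.1 (by positivity)
  have h1 : x / β ^ N ≤ 1 / β ^ N := by gcongr; exact hx.1.2.le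
  refine (mem_Ebif_iff hβ).2 ⟨⟨h0, ?_⟩, fun k => ?_⟩
  · rw [div_lt_one (by positivity)]
    exact hx.1.2.trans_le (one_le_pow₀ hβ.le)
  · rcases le_total k N with hk | hk
    · rw [hle k hk]
      exact le_mul_of_one_le_left h0 (one_le_pow₀ hβ.le)
    · obtain ⟨i, rfl⟩ := Nat.exists_eq_add_of_le' hk
      rw [Function.iterate_add_apply, hle N le_rfl, mul_div_cancel₀ _ (by positivity)]
      exact h1.trans (hx.2 i)

/-- Concatenations of nonzero full words of length `m` survive the hole `[0, β^{-2m})`. -/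
theorem codePoint_mem_survivor {β : ℝ} (hβ : 1 < β) {m : ℕ} (hm : 0 < m) {ι : Type*} {a : ι → ℝ}
    (hfull : ∀ i, a i ∈ fullLeft β m) (ha : ∀ i, 1 / β ^ m ≤ a i)
    (ha1 : ∀ i, a i + 1 / β ^ m < 1) (c : ℕ → ι) :
    codePoint (β ^ m) a c ∈ survivor β (1 / β ^ (m + m)) := by
  have hβ0 : 0 < β := by linarith
  have hL : 1 < β ^ m := one_lt_pow₀ hβ hm.ne'
  have ha' : ∀ i, a i ∈ Icc 0 (1 - 1 / β ^ m) := fun i => ⟨(hfull i).1, by linarith [ha1 i]⟩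
  have hmem : ∀ c : ℕ → ι, codePoint (β ^ m) a c ∈ Ico (1 / β ^ m) 1 := by
    intro c
    have h := codePoint_mem_Icc hL ha' fun i => c (i + 1)
    have h1 : codePoint (β ^ m) a (fun i => c (i + 1)) / β ^ m ≤ 1 / β ^ m := by
      gcongr; exact h.2
    have h0 := div_nonneg h.1 (by positivity : 0 ≤ β ^ m)
    rw [codePoint_eq hL ha']
    exact ⟨by linarith [ha (c 0)], by linarith [ha1 (c 0)]⟩
  have hIco : ∀ c : ℕ → ι, codePoint (β ^ m) a c ∈ Ico (0 : ℝ) 1 :=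
    fun c => ⟨(by positivity : 0 ≤ 1 / β ^ m).trans (hmem c).1, (hmem c).2⟩
  have hshift : ∀ (q : ℕ) (c : ℕ → ι), (Tbeta β)^[m * q] (codePoint (β ^ m) a c)
      = codePoint (β ^ m) a (fun i => c (i + q)) := by
    intro q
    induction q with
    | zero => simp
    | succ q ih =>
      intro c
      rw [Nat.mul_succ, Function.iterate_add_apply, codePoint_eq hL ha' c,
        ((hfull (c 0)).2 _ (hIco _)).2, ih]
      simp only [add_assoc]
  refine ⟨hIco c, fun k => ?_⟩
  by_contra! hlt
  set y := (Tbeta β)^[k] (codePoint (β ^ m) a c) with hy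
  have hy0 : 0 ≤ y := (Tbeta_iterate_mem_Ico β (hIco c) k).1
  have hmod : k % m < m := Nat.mod_lt k hm
  have hsmall : β ^ (m - k % m) * y < 1 / β ^ m := by
    calc β ^ (m - k % m) * y ≤ β ^ m * y := by
          gcongr
          · exact hβ.le
          · exact Nat.sub_le _ _
      _ < β ^ m * (1 / β ^ (m + m)) := by gcongr
      _ = 1 / β ^ m := by rw [pow_add]; field_simp
  have hsmall1 : 1 / β ^ m < 1 := by rw [div_lt_one (by positivity)]; exact hL
  have hnext : m - k % m + k = m * (k / m + 1) := by
    have := Nat.div_add_mod k m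
    rw [Nat.mul_succ]
    lia
  have heq := Tbeta_iterate_of_mul_lt_one hβ hy0 (m - k % m) (hsmall.trans hsmall1)
  rw [hy, ← Function.iterate_add_apply, hnext, hshift] at heq
  have := (hmem fun i => c (i + (k / m + 1))).1
  linarith

/-- A collection of at least `β^{mr}` nonzero full words of length `m` yields a subset of the
bifurcation set of dimension at least `r`. -/
theorem le_dimH_Ebif_of_fullLeft {β : ℝ} (hβ : 1 < β) {m M : ℕ} (hm : 0 < m) (hM : 1 < M)
    {a : Fin M → ℝ} (hinj : Function.Injective a) (hfull : ∀ i, a i ∈ fullLeft β m)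
    (ha : ∀ i, 1 / β ^ m ≤ a i) (ha1 : ∀ i, a i + 1 / β ^ m < 1) {r : NNReal} (hr : 0 < r)
    (hMr : (β ^ m) ^ (r : ℝ) ≤ M) : (r : ENNReal) ≤ dimH (Ebif β) := by
  have hβ0 : 0 < β := by linarith
  have hL : 1 < β ^ m := one_lt_pow₀ hβ hm.ne'
  have hL0 : 0 < β ^ m := by linarith
  let g : (ℕ → Fin M) → ℝ := fun c => codePoint (β ^ m) a c / β ^ (m + m)
  have hsub : range g ⊆ Ebif β := by
    rintro _ ⟨c, rfl⟩
    exact div_pow_mem_Ebif hβ (codePoint_mem_survivor hβ hm hfull ha ha1 c)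
  refine le_trans ?_ (dimH_mono hsub)
  refine le_dimH_range_of_holder (h := Real.ofDigits (b := M))
    (C := Real.toNNReal (((β ^ m) ^ 4) ^ (r : ℝ))) hr (fun c d => ?_) ?_
  · rw [Real.coe_toNNReal _ (by positivity), ← Real.mul_rpow (by positivity) (abs_nonneg _)]
    by_cases hcd : c = d
    · simp only [hcd, sub_self, abs_zero]
      positivity
    classical
    have hex : ∃ n, c n ≠ d n := Function.ne_iff.1 hcd
    have hmin : ∀ i < Nat.find hex, c i = d i := fun i hi => not_not.1 (Nat.find_min hex hi)
    have hfar := le_abs_codePoint_sub hL (fun i => ⟨ha i, by linarith [ha1 i]⟩)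
      (fun i j hij => fullLeft_separated hβ (hfull i) (hfull j) hij) hinj _ hmin
      (Nat.find_spec hex)
    refine (Real.abs_ofDigits_sub_ofDigits_le hmin).trans ?_
    generalize Nat.find hex = n at hfar
    have hMn : ((M : ℝ) ^ n)⁻¹ ≤ (((β ^ m) ^ n)⁻¹) ^ (r : ℝ) := by
      rw [Real.inv_rpow (by positivity), ← Real.rpow_pow_comm hL0.le]
      gcongr
    refine hMn.trans (Real.rpow_le_rpow (by positivity) ?_ r.coe_nonneg)
    simp only [g]
    rw [← sub_div, abs_div, abs_of_pos (by positivity : 0 < β ^ (m + m))]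
    calc ((β ^ m) ^ n)⁻¹ = (β ^ m) ^ 4 * (1 / (β ^ m) ^ (n + 2) / β ^ (m + m)) := by
          rw [pow_add β, pow_add _ n]
          field_simp
      _ ≤ _ := by gcongr
  · intro y hy
    obtain ⟨c, -, hc⟩ := Real.ofDigits_SurjOn hM hy
    exact ⟨c, hc⟩

theorem le_dimH_Ebif {β : ℝ} (hβ : 1 < β) {r : NNReal} (hr0 : 0 < r) (hr : r < 1) :
    (r : ENNReal) ≤ dimH (Ebif β) := by
  obtain ⟨m, hm, hcard⟩ := exists_rpow_add_le_ncard_fullLeft hβ r.coe_nonneg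
    (by exact_mod_cast hr : (r : ℝ) < 1)
  have hβm : 0 < β ^ m := pow_pos (by linarith) m
  have hfin := fullLeft_finite hβ m
  set W : Finset ℝ := hfin.toFinset \ {0, 1 - 1 / β ^ m} with hW
  have hWcard : (fullLeft β m).ncard ≤ W.card + 2 := by
    rw [ncard_eq_toFinset_card _ hfin]
    have h1 := Finset.le_card_sdiff {0, 1 - 1 / β ^ m} hfin.toFinset
    have h2 : ({0, 1 - 1 / β ^ m} : Finset ℝ).card ≤ 2 := Finset.card_le_two
    lia
  have hWcard' : ((fullLeft β m).ncard : ℝ) ≤ W.card + 2 := by exact_mod_cast hWcard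
  have hpow : 0 ≤ (β ^ m) ^ (r : ℝ) := by positivity
  have hmem : ∀ i : Fin W.card, (W.equivFin.symm i : ℝ) ∈ fullLeft β m ∧
      (W.equivFin.symm i : ℝ) ≠ 0 ∧ (W.equivFin.symm i : ℝ) ≠ 1 - 1 / β ^ m := by
    intro i
    have := (W.equivFin.symm i).2
    simpa [hW] using this
  refine le_dimH_Ebif_of_fullLeft hβ (m := m) (M := W.card) hm ?_
    (a := fun i => (W.equivFin.symm i : ℝ))
    (Subtype.val_injective.comp W.equivFin.symm.injective) (fun i => (hmem i).1)
    (fun i => ?_) (fun i => ?_) hr0 (by linarith)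
  · have : (1 : ℝ) < W.card := by linarith
    exact_mod_cast this
  · obtain ⟨h1, h2, -⟩ := hmem i
    have := fullLeft_separated hβ (zero_mem_fullLeft hβ m) h1 (lt_of_le_of_ne h1.1 h2.symm)
    linarith
  · obtain ⟨h1, -, h3⟩ := hmem i
    refine lt_of_le_of_ne ?_ (fun h => h3 (by linarith))
    exact fullLeft_add_one_div_le_one hβ h1

/-- For every `β > 1`, the bifurcation set `E_β` has Lebesgue measure
zero and Hausdorff dimension `1`. -/
theorem bifurcation_set_null_full_dim (β : ℝ) (hβ : 1 < β) :
    MeasureTheory.volume (Ebif β) = 0 ∧ dimH (Ebif β) = 1 := by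
  refine ⟨volume_Ebif_eq_zero hβ, le_antisymm ?_ ?_⟩
  · exact (dimH_mono (subset_univ _)).trans_eq Real.dimH_univ
  · refine le_of_forall_lt_imp_le_of_dense fun s hs => ?_
    lift s to NNReal using hs.ne_top
    rcases eq_or_ne s 0 with rfl | h0
    · simp
    · exact le_dimH_Ebif hβ (pos_iff_ne_zero.2 h0) (by exact_mod_cast hs)
end
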